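/- arXiv:1006.4167 — 3 statements merged into one kernel-verified Lean document; each statement's English description precedes it below -/
import Mathlib

section
/- Let H₁, H₂, H₃ be complex Hilbert spaces and let T₁ : H₁ → H₂ and T₂ : H₂ → H₃ be densely defined, closed linear operators with range(T₁) ⊆ ker(T₂). Let Q(u,v) = ⟨T₁*u, T₁*v⟩ + ⟨T₂u, T₂v⟩ with dom(Q) = dom(T₁*) ∩ dom(T₂). For f ∈ dom(Q), the following are equivalent: (i) there exists g ∈ H₂ such that Q(u,f) = ⟨u, g⟩ for all u ∈ dom(Q); (ii) T₂f ∈ dom(T₂*) and T₁*f ∈ dom(T₁). Moreover, in that case g = T₁T₁*f + T₂*T₂f. -/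
open scoped LinearPMap InnerProductSpace

/-!
The operator `S u = (T₁† u, T₂ u)` on `dom T₁† ∩ dom T₂` has adjoint `S† (x, z) = T₁ x + T₂† z` on
`dom T₁ × dom T₂†`, and the theorem is the case `(x, z) = S f`. To compute `S†`, let `P` be the
orthogonal projection onto the closure of `range T₁`. Its range lies in `ker T₂`, and the range of
`1 - P` is `ker T₁†`. Hence `P` and `1 - P` both preserve `dom S`, and testing against `P u` and
`u - P u` splits `⟪S u, (x, z)⟫ = ⟪u, g⟫` into one equation for `T₁†` alone and one for `T₂` alone:
`x ∈ dom T₁†† = dom T₁` with `T₁ x = P g`, and `z ∈ dom T₂†` with `T₂† z = g - P g`.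
-/

section Kernel

variable {E F : Type*} [AddCommGroup E] [AddCommGroup F]

theorem mem_map_ker_iff_mem_graph {R : Type*} [Ring R] [Module R E] [Module R F]
    (T : E →ₗ.[R] F) (x : E) :
    x ∈ (LinearMap.ker T.toFun).map T.domain.subtype ↔ (x, (0 : F)) ∈ T.graph := by
  simp [LinearPMap.mem_graph_iff]

theorem isClosed_map_ker {R : Type*} [CommRing R] [Module R E] [Module R F]
    [TopologicalSpace E] [TopologicalSpace F] {T : E →ₗ.[R] F} (hT : T.IsClosed) :
    IsClosed ((LinearMap.ker T.toFun).map T.domain.subtype : Set E) := by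
  have hpre : ((LinearMap.ker T.toFun).map T.domain.subtype : Set E) =
      (fun x ↦ (x, (0 : F))) ⁻¹' (T.graph : Set (E × F)) :=
    Set.ext (mem_map_ker_iff_mem_graph T)
  exact hpre ▸ hT.preimage (by fun_prop)

end Kernel

section Adjoint

variable {𝕜 E F G : Type*} [RCLike 𝕜]
  [NormedAddCommGroup E] [InnerProductSpace 𝕜 E]
  [NormedAddCommGroup F] [InnerProductSpace 𝕜 F]
  [NormedAddCommGroup G] [InnerProductSpace 𝕜 G]

theorem mem_orthogonal_comap_linearEquiv_iff (g : Submodule 𝕜 (E × F)) (w : WithLp 2 (E × F)) :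
    w ∈ (g.comap (WithLp.linearEquiv 2 𝕜 (E × F)).toLinearMap)ᗮ ↔
      (w.snd, -w.fst) ∈ g.adjoint := by
  rw [Submodule.mem_orthogonal, Submodule.mem_adjoint_iff]
  constructor
  · intro h a b hab
    simpa [WithLp.prod_inner_apply, add_comm] using h (WithLp.toLp 2 (a, b)) hab
  · intro h v hv
    simpa [WithLp.prod_inner_apply, add_comm] using h v.fst v.snd hv

theorem mem_orthogonal_orthogonal_comap_linearEquiv_iff (g : Submodule 𝕜 (E × F))
    (w : WithLp 2 (E × F)) :
    w ∈ (g.comap (WithLp.linearEquiv 2 𝕜 (E × F)).toLinearMap)ᗮᗮ ↔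
      w.ofLp ∈ g.adjoint.adjoint := by
  rw [Submodule.mem_orthogonal, Submodule.mem_adjoint_iff]
  constructor
  · intro h c d hcd
    have hw := h (WithLp.toLp 2 (-d, c))
      ((mem_orthogonal_comap_linearEquiv_iff g _).2 (by simpa using hcd))
    rw [WithLp.prod_inner_apply, inner_neg_left] at hw
    linear_combination -hw
  · intro h v hv
    have hw := h v.snd (-v.fst) ((mem_orthogonal_comap_linearEquiv_iff g v).1 hv)
    rw [inner_neg_left] at hw
    rw [WithLp.prod_inner_apply, WithLp.ofLp_fst, WithLp.ofLp_snd]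
    linear_combination -hw

theorem submodule_adjoint_adjoint_eq_topologicalClosure [CompleteSpace E] [CompleteSpace F]
    (g : Submodule 𝕜 (E × F)) :
    g.adjoint.adjoint = g.topologicalClosure := by
  ext p
  rw [← WithLp.ofLp_toLp 2 p, ← mem_orthogonal_orthogonal_comap_linearEquiv_iff,
    Submodule.orthogonal_orthogonal_eq_closure]
  exact Set.ext_iff.1
    ((WithLp.prodContinuousLinearEquiv 2 𝕜 E F).toHomeomorph.preimage_closure
      (g : Set (E × F))).symm (WithLp.toLp 2 p)

theorem graph_adjoint_adjoint_eq_graph [CompleteSpace E] [CompleteSpace F] {T : E →ₗ.[𝕜] F}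
    (hd : Dense (T.domain : Set E)) (hc : T.IsClosed) :
    T†.graph.adjoint = T.graph := by
  rw [LinearPMap.adjoint_graph_eq_graph_adjoint hd,
    submodule_adjoint_adjoint_eq_topologicalClosure]
  exact IsClosed.submodule_topologicalClosure_eq hc

theorem mem_graph_adjoint_iff_forall_inner_eq (T : E →ₗ.[𝕜] F) (x : F) (y : E) :
    (x, y) ∈ T.graph.adjoint ↔ ∀ u : T.domain, ⟪T u, x⟫_𝕜 = ⟪(u : E), y⟫_𝕜 := by
  simp [LinearPMap.mem_graph_iff, sub_eq_zero]

theorem orthogonal_range_eq_map_ker_adjoint [CompleteSpace E] {T : E →ₗ.[𝕜] F}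
    (hd : Dense (T.domain : Set E)) :
    (LinearMap.range T.toFun)ᗮ = (LinearMap.ker T†.toFun).map T†.domain.subtype := by
  ext w
  rw [mem_map_ker_iff_mem_graph, LinearPMap.adjoint_graph_eq_graph_adjoint hd,
    mem_graph_adjoint_iff_forall_inner_eq]
  simp only [Submodule.mem_orthogonal, LinearMap.mem_range, forall_exists_index,
    forall_apply_eq_imp_iff, inner_zero_right]
  rfl

theorem mk_starProjection_mem_graph_adjoint {A : E →ₗ.[𝕜] F} {B : E →ₗ.[𝕜] G}
    {K : Submodule 𝕜 E} [K.HasOrthogonalProjection]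
    (hA : Kᗮ ≤ (LinearMap.ker A.toFun).map A.domain.subtype)
    (hB : K ≤ (LinearMap.ker B.toFun).map B.domain.subtype) {x : F} {z : G} {g : E}
    (h : ∀ (u : E) (hu₁ : u ∈ A.domain) (hu₂ : u ∈ B.domain),
      ⟪A ⟨u, hu₁⟩, x⟫_𝕜 + ⟪B ⟨u, hu₂⟩, z⟫_𝕜 = ⟪u, g⟫_𝕜) :
    (x, K.starProjection g) ∈ A.graph.adjoint := by
  rw [mem_graph_adjoint_iff_forall_inner_eq]
  intro u
  obtain ⟨w, (hAw : A w = 0), (hw : (w : E) = u - K.starProjection u)⟩ :=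
    hA (K.sub_starProjection_mem_orthogonal u)
  obtain ⟨v, (hBv : B v = 0), (hv : (v : E) = K.starProjection u)⟩ :=
    hB (K.starProjection_apply_mem u)
  have huw : ((u - w : A.domain) : E) = v := by
    rw [Submodule.coe_sub, hw, hv, sub_sub_cancel]
  have hvA : (v : E) ∈ A.domain := huw ▸ (u - w).2
  have hAv : A ⟨v, hvA⟩ = A u := by
    have heq : (⟨v, hvA⟩ : A.domain) = u - w := Subtype.ext huw.symm
    rw [heq, LinearPMap.map_sub, hAw, sub_zero]
  calc ⟪A u, x⟫_𝕜 = ⟪A ⟨v, hvA⟩, x⟫_𝕜 + ⟪B v, z⟫_𝕜 := by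
        rw [hAv, hBv, inner_zero_left, add_zero]
    _ = ⟪(v : E), g⟫_𝕜 := h v hvA v.2
    _ = ⟪(u : E), K.starProjection g⟫_𝕜 := by
        rw [hv, K.inner_starProjection_left_eq_right]

theorem form_representation_iff_general [CompleteSpace E] [CompleteSpace F]
    {T₁ : E →ₗ.[𝕜] F} {T₂ : F →ₗ.[𝕜] G}
    (hd₁ : Dense (T₁.domain : Set E)) (hd₂ : Dense (T₂.domain : Set F)) (hc₁ : T₁.IsClosed)
    (hrange : (LinearMap.range T₁.toFun).topologicalClosure ≤
      (LinearMap.ker T₂.toFun).map T₂.domain.subtype)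
    (x : E) (z : G) (g : F) :
    (∀ (u : F) (hu₁ : u ∈ T₁†.domain) (hu₂ : u ∈ T₂.domain),
        ⟪T₁† ⟨u, hu₁⟩, x⟫_𝕜 + ⟪T₂ ⟨u, hu₂⟩, z⟫_𝕜 = ⟪u, g⟫_𝕜) ↔
      ∃ (hz : z ∈ T₂†.domain) (hx : x ∈ T₁.domain), g = T₁ ⟨x, hx⟩ + T₂† ⟨z, hz⟩ := by
  constructor
  · intro h
    let K := (LinearMap.range T₁.toFun).topologicalClosure
    have : CompleteSpace K := (Submodule.isClosed_topologicalClosure _).completeSpace_coe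
    have hK : Kᗮ ≤ (LinearMap.ker T₁†.toFun).map T₁†.domain.subtype := by
      rw [Submodule.orthogonal_closure, orthogonal_range_eq_map_ker_adjoint hd₁]
    have hx : (x, K.starProjection g) ∈ T₁.graph :=
      graph_adjoint_adjoint_eq_graph hd₁ hc₁ ▸
        mk_starProjection_mem_graph_adjoint hK hrange h
    have hz : (z, Kᗮ.starProjection g) ∈ T₂†.graph := by
      rw [LinearPMap.adjoint_graph_eq_graph_adjoint hd₂]
      refine mk_starProjection_mem_graph_adjoint (z := x) ?_ hK ?_
      · rwa [K.orthogonal_orthogonal]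
      · exact fun u hu₂ hu₁ ↦ (add_comm _ _).trans (h u hu₁ hu₂)
    obtain ⟨x, rfl, hTx⟩ := T₁.mem_graph_iff.1 hx
    obtain ⟨z, rfl, hTz⟩ := T₂†.mem_graph_iff.1 hz
    exact ⟨z.2, x.2, by simp [hTx, hTz]⟩
  · rintro ⟨hz, hx, rfl⟩ u hu₁ hu₂
    rw [inner_add_right]
    exact congrArg₂ (· + ·) (LinearPMap.adjoint_isFormalAdjoint hd₁ ⟨u, hu₁⟩ ⟨x, hx⟩)
      ((LinearPMap.adjoint_isFormalAdjoint hd₂).symm ⟨u, hu₂⟩ ⟨z, hz⟩)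

end Adjoint

/-- For `f ∈ dom Q = dom T₁* ∩ dom T₂`, the following are equivalent:
(i) there is `g ∈ H₂` with `Q(u, f) = ⟨u, g⟩` for all `u ∈ dom Q`;
(ii) `T₂ f ∈ dom T₂*` and `T₁* f ∈ dom T₁`.
Moreover, in that case `g = T₁ T₁* f + T₂* T₂ f`. -/
theorem form_representation_iff
    {H₁ H₂ H₃ : Type*}
    [NormedAddCommGroup H₁] [InnerProductSpace ℂ H₁] [CompleteSpace H₁]
    [NormedAddCommGroup H₂] [InnerProductSpace ℂ H₂] [CompleteSpace H₂]
    [NormedAddCommGroup H₃] [InnerProductSpace ℂ H₃] [CompleteSpace H₃]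
    (T₁ : H₁ →ₗ.[ℂ] H₂) (T₂ : H₂ →ₗ.[ℂ] H₃)
    (hd₁ : Dense (T₁.domain : Set H₁)) (hd₂ : Dense (T₂.domain : Set H₂))
    (hc₁ : T₁.IsClosed) (hc₂ : T₂.IsClosed)
    (hrange : LinearMap.range T₁.toFun ≤
      (LinearMap.ker T₂.toFun).map T₂.domain.subtype)
    (f : H₂) (hf₁ : f ∈ T₁.adjoint.domain) (hf₂ : f ∈ T₂.domain) :
    ((∃ g : H₂, ∀ (u : H₂) (hu₁ : u ∈ T₁.adjoint.domain) (hu₂ : u ∈ T₂.domain),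
        ⟪T₁.adjoint ⟨u, hu₁⟩, T₁.adjoint ⟨f, hf₁⟩⟫_ℂ + ⟪T₂ ⟨u, hu₂⟩, T₂ ⟨f, hf₂⟩⟫_ℂ
          = ⟪u, g⟫_ℂ) ↔
      (T₂ ⟨f, hf₂⟩ ∈ T₂.adjoint.domain ∧ T₁.adjoint ⟨f, hf₁⟩ ∈ T₁.domain)) ∧
    (∀ g : H₂,
      (∀ (u : H₂) (hu₁ : u ∈ T₁.adjoint.domain) (hu₂ : u ∈ T₂.domain),
        ⟪T₁.adjoint ⟨u, hu₁⟩, T₁.adjoint ⟨f, hf₁⟩⟫_ℂ + ⟪T₂ ⟨u, hu₂⟩, T₂ ⟨f, hf₂⟩⟫_ℂ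
          = ⟪u, g⟫_ℂ) →
      ∀ (ha : T₂ ⟨f, hf₂⟩ ∈ T₂.adjoint.domain) (hb : T₁.adjoint ⟨f, hf₁⟩ ∈ T₁.domain),
        g = T₁ ⟨T₁.adjoint ⟨f, hf₁⟩, hb⟩ + T₂.adjoint ⟨T₂ ⟨f, hf₂⟩, ha⟩) := by
  simp only [form_representation_iff_general hd₁ hd₂ hc₁
    (Submodule.topologicalClosure_minimal _ hrange (isClosed_map_ker hc₂))]
  exact ⟨by simp, by rintro g ⟨_, _, rfl⟩ _ _; rfl⟩
end

section
/- Let H₁, H₂, H₃ be complex Hilbert spaces and let T₁ : H₁ → H₂ and T₂ : H₂ → H₃ be densely defined, closed linear operators with range(T₁) ⊆ ker(T₂). If there exists a constant c > 0 such that ‖T₁*u‖² + ‖T₂u‖² ≥ c‖u‖² for all u ∈ dom(T₁*) ∩ dom(T₂), then range(T₂*) = ker(T₁*). -/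
open scoped LinearPMap InnerProductSpace

/-!
Since `ker T₁* = (range T₁)ᗮ`, the inclusion `range T₂* ⊆ ker T₁*` is immediate. Conversely, let
`f ∈ ker T₁*`, and split `u ∈ dom T₂` into its components `k` in the closure of `range T₁` and `v`
in `ker T₁*`. As `ker T₂` is closed it contains `k`, so `v ∈ dom T₂` and `T₂ v = T₂ u`, and
coercivity gives `|⟪f, u⟫| = |⟪f, v⟫| ≤ ‖f‖ ‖T₂ u‖ / √c`. Hence `T₂ u ↦ ⟪f, u⟫` is a well-defined
bounded functional on `range T₂`, and by Hahn–Banach and Riesz it is represented by some `w`, which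
means that `T₂* w = f`.
-/

theorem mem_map_subtype_ker_iff_mem_graph {R E F : Type*} [Ring R] [AddCommGroup E]
    [Module R E] [AddCommGroup F] [Module R F] {T : E →ₗ.[R] F} {x : E} :
    x ∈ (LinearMap.ker T.toFun).map T.domain.subtype ↔ (x, (0 : F)) ∈ T.graph := by
  simp [and_comm]

theorem isClosed_map_subtype_ker {R E F : Type*} [CommRing R]
    [AddCommGroup E] [Module R E] [TopologicalSpace E]
    [AddCommGroup F] [Module R F] [TopologicalSpace F] {T : E →ₗ.[R] F} (hT : T.IsClosed) :
    IsClosed ((LinearMap.ker T.toFun).map T.domain.subtype : Set E) := by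
  have hpreimage : ((LinearMap.ker T.toFun).map T.domain.subtype : Set E) =
      (fun x ↦ (x, (0 : F))) ⁻¹' T.graph := Set.ext fun _ ↦ mem_map_subtype_ker_iff_mem_graph
  rw [hpreimage]
  exact hT.preimage (by fun_prop)

theorem exists_strongDual_comp_eq_of_norm_le {𝕜 V F : Type*} [RCLike 𝕜] [AddCommGroup V]
    [Module 𝕜 V] [SeminormedAddCommGroup F] [NormedSpace 𝕜 F] (L : V →ₗ[𝕜] F) (ℓ : V →ₗ[𝕜] 𝕜)
    {C : ℝ} (h : ∀ v, ‖ℓ v‖ ≤ C * ‖L v‖) :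
    ∃ g : StrongDual 𝕜 F, ∀ v, g (L v) = ℓ v := by
  have hker : LinearMap.ker L ≤ LinearMap.ker ℓ := fun v hv ↦ by
    simpa [LinearMap.mem_ker.mp hv] using h v
  let ℓ₀ : LinearMap.range L →ₗ[𝕜] 𝕜 := (LinearMap.ker L).liftQ ℓ hker ∘ₗ L.quotKerEquivRange.symm
  have hℓ₀ (v : V) : ℓ₀ ⟨L v, v, rfl⟩ = ℓ v :=
    congrArg ((LinearMap.ker L).liftQ ℓ hker) (L.quotKerEquivRange_symm_apply_image v ⟨v, rfl⟩)
  have hbound : ∀ y, ‖ℓ₀ y‖ ≤ C * ‖y‖ := by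
    rintro ⟨_, v, rfl⟩
    exact (congrArg norm (hℓ₀ v)).trans_le (h v)
  obtain ⟨g, hg, -⟩ := exists_extension_norm_eq _ (ℓ₀.mkContinuous C hbound)
  exact ⟨g, fun v ↦ (hg ⟨L v, v, rfl⟩).trans (hℓ₀ v)⟩

theorem norm_inner_le_of_mem_orthogonal_of_le_ker {𝕜 E F : Type*} [RCLike 𝕜]
    [NormedAddCommGroup E] [InnerProductSpace 𝕜 E] [SeminormedAddCommGroup F] [NormedSpace 𝕜 F]
    {T : E →ₗ.[𝕜] F} {K : Submodule 𝕜 E} [K.HasOrthogonalProjection]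
    (hK : K ≤ (LinearMap.ker T.toFun).map T.domain.subtype) {C : ℝ}
    (hbound : ∀ v : T.domain, (v : E) ∈ Kᗮ → ‖(v : E)‖ ≤ C * ‖T v‖)
    {x : E} (hx : x ∈ Kᗮ) (u : T.domain) :
    ‖⟪x, u⟫_𝕜‖ ≤ ‖x‖ * C * ‖T u‖ := by
  obtain ⟨k, hk, v, hv, huv⟩ := K.exists_add_mem_mem_orthogonal (u : E)
  obtain ⟨k, hTk : T k = 0, rfl⟩ := hK hk
  obtain rfl : v = (u - k : T.domain) := by simp [huv]
  calc ‖⟪x, u⟫_𝕜‖ = ‖⟪x, (u - k : T.domain)⟫_𝕜‖ := by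
        rw [huv, inner_add_right, Submodule.inner_left_of_mem_orthogonal hk hx, zero_add]
    _ ≤ ‖x‖ * ‖((u - k : T.domain) : E)‖ := norm_inner_le_norm _ _
    _ ≤ ‖x‖ * (C * ‖T (u - k)‖) := by gcongr; exact hbound _ hv
    _ = ‖x‖ * C * ‖T u‖ := by rw [LinearPMap.map_sub, hTk, sub_zero, mul_assoc]

section Adjoint

variable {𝕜 E F : Type*} [RCLike 𝕜]
  [NormedAddCommGroup E] [InnerProductSpace 𝕜 E] [CompleteSpace E]
  [NormedAddCommGroup F] [InnerProductSpace 𝕜 F] {T : E →ₗ.[𝕜] F}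

theorem mem_graph_adjoint_iff (hT : Dense (T.domain : Set E)) {y : F} {x : E} :
    (y, x) ∈ T†.graph ↔ ∀ u : T.domain, ⟪x, u⟫_𝕜 = ⟪y, T u⟫_𝕜 := by
  rw [LinearPMap.mem_graph_iff]
  constructor
  · rintro ⟨z, rfl, rfl⟩
    exact LinearPMap.adjoint_isFormalAdjoint hT z
  · intro h
    exact ⟨⟨y, LinearPMap.mem_adjoint_domain_of_exists y ⟨x, h⟩⟩, rfl,
      LinearPMap.adjoint_apply_eq hT _ h⟩

theorem mem_range_adjoint_iff (hT : Dense (T.domain : Set E)) {x : E} :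
    x ∈ LinearMap.range T†.toFun ↔ ∃ y : F, ∀ u : T.domain, ⟪x, u⟫_𝕜 = ⟪y, T u⟫_𝕜 := by
  simp only [← mem_graph_adjoint_iff hT, ← LinearPMap.mem_range_iff]
  rfl

theorem map_subtype_ker_adjoint_eq_orthogonal_range (hT : Dense (T.domain : Set E)) :
    (LinearMap.ker T†.toFun).map T†.domain.subtype = (LinearMap.range T.toFun)ᗮ := by
  ext y
  rw [mem_map_subtype_ker_iff_mem_graph, mem_graph_adjoint_iff hT, Submodule.mem_orthogonal']
  constructor
  · rintro h _ ⟨u, rfl⟩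
    simpa using (h u).symm
  · intro h u
    simpa using (h (T u) ⟨u, rfl⟩).symm

theorem range_adjoint_le_orthogonal_ker (hT : Dense (T.domain : Set E)) :
    LinearMap.range T†.toFun ≤ ((LinearMap.ker T.toFun).map T.domain.subtype)ᗮ := by
  intro x hx
  obtain ⟨y, hy⟩ := (mem_range_adjoint_iff hT).mp hx
  rw [Submodule.mem_orthogonal']
  rintro _ ⟨u, hu : T u = 0, rfl⟩
  simpa [hu] using hy u

theorem mem_range_adjoint_of_norm_inner_le [CompleteSpace F] (hT : Dense (T.domain : Set E))
    {x : E} {C : ℝ} (hx : ∀ u : T.domain, ‖⟪x, u⟫_𝕜‖ ≤ C * ‖T u‖) :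
    x ∈ LinearMap.range T†.toFun := by
  obtain ⟨g, hg⟩ :=
    exists_strongDual_comp_eq_of_norm_le T.toFun (innerₛₗ 𝕜 x ∘ₗ T.domain.subtype) hx
  refine (mem_range_adjoint_iff hT).mpr ⟨(InnerProductSpace.toDual 𝕜 F).symm g, fun u ↦ ?_⟩
  rw [InnerProductSpace.toDual_symm_apply]
  exact (hg u).symm

theorem range_adjoint_eq_orthogonal_of_le_ker [CompleteSpace F] (hT : Dense (T.domain : Set E))
    {K : Submodule 𝕜 E} [K.HasOrthogonalProjection]
    (hK : K ≤ (LinearMap.ker T.toFun).map T.domain.subtype) {C : ℝ}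
    (hbound : ∀ v : T.domain, (v : E) ∈ Kᗮ → ‖(v : E)‖ ≤ C * ‖T v‖) :
    LinearMap.range T†.toFun = Kᗮ :=
  le_antisymm ((range_adjoint_le_orthogonal_ker hT).trans (Submodule.orthogonal_le hK)) fun _ hx ↦
    mem_range_adjoint_of_norm_inner_le hT (norm_inner_le_of_mem_orthogonal_of_le_ker hK hbound hx)

end Adjoint

theorem norm_le_inv_sqrt_mul_norm_of_coercive {𝕜 H₁ H₂ H₃ : Type*} [RCLike 𝕜]
    [NormedAddCommGroup H₁] [InnerProductSpace 𝕜 H₁] [CompleteSpace H₁]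
    [NormedAddCommGroup H₂] [InnerProductSpace 𝕜 H₂]
    [SeminormedAddCommGroup H₃] [NormedSpace 𝕜 H₃]
    {T₁ : H₁ →ₗ.[𝕜] H₂} {T₂ : H₂ →ₗ.[𝕜] H₃} {c : ℝ} (hc : 0 < c)
    (hcoercive : ∀ (u : H₂) (hu₁ : u ∈ T₁†.domain) (hu₂ : u ∈ T₂.domain),
      c * ‖u‖ ^ 2 ≤ ‖T₁† ⟨u, hu₁⟩‖ ^ 2 + ‖T₂ ⟨u, hu₂⟩‖ ^ 2)
    (u : T₂.domain) (hu : (u : H₂) ∈ (LinearMap.ker T₁†.toFun).map T₁†.domain.subtype) :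
    ‖(u : H₂)‖ ≤ (√c)⁻¹ * ‖T₂ u‖ := by
  obtain ⟨u, hu₂⟩ := u
  obtain ⟨⟨u, hu₁⟩, hu₀ : T₁† ⟨u, hu₁⟩ = 0, rfl⟩ := hu
  have hsq : c * ‖u‖ ^ 2 ≤ ‖T₂ ⟨u, hu₂⟩‖ ^ 2 := by
    simpa [hu₀] using hcoercive u hu₁ hu₂
  rw [le_inv_mul_iff₀ (Real.sqrt_pos.mpr hc)]
  refine le_of_sq_le_sq ?_ (norm_nonneg _)
  rwa [mul_pow, Real.sq_sqrt hc.le]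

theorem range_adjoint_eq_ker_adjoint_of_coercive_general
    {𝕜 H₁ H₂ H₃ : Type*} [RCLike 𝕜]
    [NormedAddCommGroup H₁] [InnerProductSpace 𝕜 H₁] [CompleteSpace H₁]
    [NormedAddCommGroup H₂] [InnerProductSpace 𝕜 H₂] [CompleteSpace H₂]
    [NormedAddCommGroup H₃] [InnerProductSpace 𝕜 H₃] [CompleteSpace H₃]
    (T₁ : H₁ →ₗ.[𝕜] H₂) (T₂ : H₂ →ₗ.[𝕜] H₃)
    (hd₁ : Dense (T₁.domain : Set H₁)) (hd₂ : Dense (T₂.domain : Set H₂))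
    (hclosed : IsClosed ((LinearMap.ker T₂.toFun).map T₂.domain.subtype : Set H₂))
    (hrange : LinearMap.range T₁.toFun ≤ (LinearMap.ker T₂.toFun).map T₂.domain.subtype)
    (C : ℝ)
    (hbound : ∀ u : T₂.domain,
      (u : H₂) ∈ (LinearMap.ker T₁†.toFun).map T₁†.domain.subtype → ‖(u : H₂)‖ ≤ C * ‖T₂ u‖) :
    LinearMap.range T₂†.toFun = (LinearMap.ker T₁†.toFun).map T₁†.domain.subtype := by
  have hker : (LinearMap.ker T₁†.toFun).map T₁†.domain.subtype =
      (LinearMap.range T₁.toFun).topologicalClosureᗮ := by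
    rw [map_subtype_ker_adjoint_eq_orthogonal_range hd₁, Submodule.orthogonal_closure]
  rw [hker] at hbound ⊢
  exact range_adjoint_eq_orthogonal_of_le_ker hd₂
    (Submodule.topologicalClosure_minimal _ hrange hclosed) hbound

/-- If there is `c > 0` with `‖T₁*u‖² + ‖T₂u‖² ≥ c‖u‖²` for all
`u ∈ dom T₁* ∩ dom T₂`, then `range T₂* = ker T₁*`. -/
theorem range_adjoint_eq_ker_adjoint_of_coercive
    {H₁ H₂ H₃ : Type*}
    [NormedAddCommGroup H₁] [InnerProductSpace ℂ H₁] [CompleteSpace H₁]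
    [NormedAddCommGroup H₂] [InnerProductSpace ℂ H₂] [CompleteSpace H₂]
    [NormedAddCommGroup H₃] [InnerProductSpace ℂ H₃] [CompleteSpace H₃]
    (T₁ : H₁ →ₗ.[ℂ] H₂) (T₂ : H₂ →ₗ.[ℂ] H₃)
    (hd₁ : Dense (T₁.domain : Set H₁)) (hd₂ : Dense (T₂.domain : Set H₂))
    (hc₁ : T₁.IsClosed) (hc₂ : T₂.IsClosed)
    (hrange : LinearMap.range T₁.toFun ≤
      (LinearMap.ker T₂.toFun).map T₂.domain.subtype)
    (c : ℝ) (hc : 0 < c)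
    (hcoercive : ∀ (u : H₂) (hu₁ : u ∈ T₁.adjoint.domain) (hu₂ : u ∈ T₂.domain),
      c * ‖u‖ ^ 2 ≤ ‖T₁.adjoint ⟨u, hu₁⟩‖ ^ 2 + ‖T₂ ⟨u, hu₂⟩‖ ^ 2) :
    LinearMap.range T₂.adjoint.toFun =
      (LinearMap.ker T₁.adjoint.toFun).map T₁.adjoint.domain.subtype :=
  range_adjoint_eq_ker_adjoint_of_coercive_general T₁ T₂ hd₁ hd₂ (isClosed_map_subtype_ker hc₂)
    hrange (√c)⁻¹ (norm_le_inv_sqrt_mul_norm_of_coercive hc hcoercive)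
end

section
/- Let H₁, H₂, H₃ be complex Hilbert spaces and let T₁ : H₁ → H₂ and T₂ : H₂ → H₃ be densely defined, closed linear operators with range(T₁) ⊆ ker(T₂). Suppose range(T₁) and range(T₂) are closed and L := ker(T₁*) ∩ ker(T₂) is finite-dimensional. Then L ⊆ dom(T₁*) ∩ ker(T₂), ker(T₂) ∩ L^⊥ = P_{L^⊥}(range(T₁)) (where P_{L^⊥} is the orthogonal projection of H₂ onto L^⊥), and the range of the restriction of T₂ to dom(T₂) ∩ L^⊥ is closed in H₃. -/
open scoped LinearPMap InnerProductSpace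

/-!
Since `ker T₁† = (range T₁)ᗮ`, the space `L` is the orthogonal complement of `range T₁` inside
`ker T₂`. Hence `ker T₂ ⊓ Lᗮ` is `range T₁`, on which the projection onto `Lᗮ` is the identity.
Removing from a vector of `dom T₂` its component in `L ≤ ker T₂` does not change its image, so
`T₂` has the same range on `dom T₂ ⊓ Lᗮ` as on all of `dom T₂`.
-/

section PartialLinearMap

variable {R E F : Type*} [Ring R] [AddCommGroup E] [Module R E] [AddCommGroup F] [Module R F]

/-- The kernel of a partially defined linear map, as a submodule of the ambient space instead of
the domain. -/
def ambientKer (T : E →ₗ.[R] F) : Submodule R E :=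
  (LinearMap.ker T.toFun).map T.domain.subtype

theorem mem_ambientKer {T : E →ₗ.[R] F} {y : E} :
    y ∈ ambientKer T ↔ ∃ hy : y ∈ T.domain, T ⟨y, hy⟩ = 0 := by
  constructor
  · rintro ⟨z, hz, rfl⟩
    exact ⟨z.2, hz⟩
  · rintro ⟨hy, hTy⟩
    exact ⟨⟨y, hy⟩, hTy, rfl⟩

theorem ambientKer_le_domain (T : E →ₗ.[R] F) : ambientKer T ≤ T.domain :=
  Submodule.map_subtype_le _ _

theorem image_domain_inter_eq_range_of_codisjoint (T : E →ₗ.[R] F) {L M : Submodule R E}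
    (hL : L ≤ ambientKer T) (hLM : Codisjoint L M) :
    T '' {x : T.domain | (x : E) ∈ M} = LinearMap.range T.toFun := by
  refine Set.Subset.antisymm (Set.image_subset_range _ _) ?_
  rintro _ ⟨x, rfl⟩
  obtain ⟨l, m, hl, hm, hlm⟩ := Submodule.codisjoint_iff_exists_add_eq.mp hLM (x : E)
  obtain ⟨hl_dom, hTl⟩ := mem_ambientKer.mp (hL hl)
  refine ⟨x - ⟨l, hl_dom⟩, ?_, ?_⟩
  · rwa [Set.mem_ofPred_eq, Submodule.coe_sub, ← hlm, add_sub_cancel_left]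
  · rw [T.map_sub, hTl, sub_zero, LinearPMap.toFun_eq_coe]

end PartialLinearMap

section InnerProduct

variable {𝕜 E F : Type*} [RCLike 𝕜]
  [NormedAddCommGroup E] [InnerProductSpace 𝕜 E] [NormedAddCommGroup F] [InnerProductSpace 𝕜 F]

theorem ambientKer_adjoint [CompleteSpace E] {T : E →ₗ.[𝕜] F}
    (hT : Dense (T.domain : Set E)) : ambientKer T† = (LinearMap.range T.toFun)ᗮ := by
  ext y
  rw [mem_ambientKer, Submodule.mem_orthogonal']
  constructor
  · rintro ⟨hy, hTy⟩ _ ⟨x, rfl⟩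
    calc ⟪y, T x⟫_𝕜 = ⟪T† ⟨y, hy⟩, (x : E)⟫_𝕜 :=
          (LinearPMap.adjoint_isFormalAdjoint hT ⟨y, hy⟩ x).symm
      _ = 0 := by rw [hTy, inner_zero_left]
  · intro hy
    have zero_adjoint (x : T.domain) : ⟪(0 : E), x⟫_𝕜 = ⟪y, T x⟫_𝕜 := by
      rw [inner_zero_left, hy (T x) ⟨x, rfl⟩]
    have hy_dom : y ∈ T†.domain := LinearPMap.mem_adjoint_domain_of_exists y ⟨0, zero_adjoint⟩
    exact ⟨hy_dom, LinearPMap.adjoint_apply_eq hT ⟨y, hy_dom⟩ zero_adjoint⟩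

theorem inf_orthogonal_orthogonal_inf_of_le {U K : Submodule 𝕜 E} [U.HasOrthogonalProjection]
    (hUK : U ≤ K) : K ⊓ (Uᗮ ⊓ K)ᗮ = U := by
  have hU : U ≤ (Uᗮ ⊓ K)ᗮ :=
    U.le_orthogonal_orthogonal.trans (Submodule.orthogonal_le inf_le_left)
  calc K ⊓ (Uᗮ ⊓ K)ᗮ = (U ⊔ Uᗮ ⊓ K) ⊓ (Uᗮ ⊓ K)ᗮ := by
        rw [Submodule.sup_orthogonal_inf_of_hasOrthogonalProjection hUK]
    _ = U ⊔ (Uᗮ ⊓ K) ⊓ (Uᗮ ⊓ K)ᗮ := sup_inf_assoc_of_le _ hU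
    _ = U := by rw [Submodule.inf_orthogonal_eq_bot, sup_bot_eq]

theorem image_orthogonalProjectionOnto_of_le {U K : Submodule 𝕜 E} [K.HasOrthogonalProjection]
    (hUK : U ≤ K) : (fun w => (K.orthogonalProjectionOnto w : E)) '' U = U :=
  Set.EqOn.image_eq_self fun _ hw => Submodule.starProjection_eq_self_iff.mpr (hUK hw)

theorem kernel_conditions_of_closed_ranges_general [CompleteSpace E]
    {G : Type*} [AddCommGroup G] [Module 𝕜 G] [TopologicalSpace G]
    (T₁ : E →ₗ.[𝕜] F) (T₂ : F →ₗ.[𝕜] G) (hd₁ : Dense (T₁.domain : Set E))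
    (hrange : LinearMap.range T₁.toFun ≤ ambientKer T₂)
    [(LinearMap.range T₁.toFun).HasOrthogonalProjection]
    (hclosed₂ : IsClosed (LinearMap.range T₂.toFun : Set G))
    (L : Submodule 𝕜 F) (hL : L = ambientKer T₁† ⊓ ambientKer T₂) [L.HasOrthogonalProjection] :
    L ≤ T₁†.domain ⊓ ambientKer T₂ ∧
    ((ambientKer T₂ ⊓ Lᗮ : Submodule 𝕜 F) : Set F) =
      (fun w => (Lᗮ.orthogonalProjectionOnto w : F)) '' (LinearMap.range T₁.toFun) ∧
    IsClosed (T₂ '' {x : T₂.domain | (x : F) ∈ Lᗮ}) := by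
  have ker_inf_orthogonal : ambientKer T₂ ⊓ Lᗮ = LinearMap.range T₁.toFun := by
    rw [hL, ambientKer_adjoint hd₁, inf_orthogonal_orthogonal_inf_of_le hrange]
  have range_le_orthogonal : LinearMap.range T₁.toFun ≤ Lᗮ :=
    ker_inf_orthogonal.ge.trans inf_le_right
  refine ⟨hL.le.trans (inf_le_inf_right _ (ambientKer_le_domain _)), ?_, ?_⟩
  · rw [ker_inf_orthogonal, image_orthogonalProjectionOnto_of_le range_le_orthogonal]
  · rwa [image_domain_inter_eq_range_of_codisjoint T₂ (hL.le.trans inf_le_right)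
      L.isCompl_orthogonal.codisjoint]

end InnerProduct

/-- Suppose `range T₁` and `range T₂` are closed and
`L := ker T₁* ∩ ker T₂` is finite-dimensional. Then `L ⊆ dom T₁* ∩ ker T₂`,
`ker T₂ ∩ Lᗮ = P_{Lᗮ}(range T₁)`, and the range of the restriction of `T₂` to
`dom T₂ ∩ Lᗮ` is closed in `H₃`. -/
theorem kernel_conditions_of_closed_ranges
    {H₁ H₂ H₃ : Type*}
    [NormedAddCommGroup H₁] [InnerProductSpace ℂ H₁] [CompleteSpace H₁]
    [NormedAddCommGroup H₂] [InnerProductSpace ℂ H₂] [CompleteSpace H₂]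
    [NormedAddCommGroup H₃] [InnerProductSpace ℂ H₃] [CompleteSpace H₃]
    (T₁ : H₁ →ₗ.[ℂ] H₂) (T₂ : H₂ →ₗ.[ℂ] H₃)
    (hd₁ : Dense (T₁.domain : Set H₁)) (hd₂ : Dense (T₂.domain : Set H₂))
    (hc₁ : T₁.IsClosed) (hc₂ : T₂.IsClosed)
    (hrange : LinearMap.range T₁.toFun ≤
      (LinearMap.ker T₂.toFun).map T₂.domain.subtype)
    (hclosed₁ : IsClosed (LinearMap.range T₁.toFun : Set H₂))
    (hclosed₂ : IsClosed (LinearMap.range T₂.toFun : Set H₃))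
    (L : Submodule ℂ H₂)
    (hLdef : L = (LinearMap.ker T₁.adjoint.toFun).map T₁.adjoint.domain.subtype ⊓
      (LinearMap.ker T₂.toFun).map T₂.domain.subtype)
    [FiniteDimensional ℂ L] :
    L ≤ T₁.adjoint.domain ⊓ (LinearMap.ker T₂.toFun).map T₂.domain.subtype ∧
    (((LinearMap.ker T₂.toFun).map T₂.domain.subtype ⊓ Lᗮ : Submodule ℂ H₂) : Set H₂) =
      (fun w => (Submodule.orthogonalProjectionOnto Lᗮ w : H₂)) '' (LinearMap.range T₁.toFun) ∧
    IsClosed ((fun x : T₂.domain => T₂ x) '' {x : T₂.domain | (x : H₂) ∈ Lᗮ} : Set H₃) :=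
  have := hclosed₁.completeSpace_coe
  kernel_conditions_of_closed_ranges_general T₁ T₂ hd₁ hrange hclosed₂ L hLdef
end
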